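/- For every m ≥ 1, the number of valid layer orderings of the 2-alternating assignment with m blocks on the 1×(2m+1) strip equals the number of walks of length m in ℤ² starting at (2,1) whose allowed steps move from a point (a,b) to a point (b+1, i) for some integer i with 1 ≤ i ≤ a. -/

import Mathlib

/-- A crease direction: mountain or valley. -/
inductive MV : Type
  | M : MV
  | V : MV
deriving DecidableEq

/-- The value `σ(i)` of a layer ordering at face `i`, as a natural number
(`0` if `i` is out of range). -/
def faceVal {n : ℕ} (σ : Equiv.Perm (Fin n)) (i : ℕ) : ℕ :=
  if h : i < n then (σ ⟨i, h⟩ : Fin n) else 0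

/-- Condition (1): the layer ordering respects the mountain–valley assignment. -/
def MVRelations (n : ℕ) (μ : ℕ → MV) (σ : Equiv.Perm (Fin n)) : Prop :=
  ∀ i, i + 1 < n →
    if (μ i = MV.M ∧ Even i) ∨ (μ i = MV.V ∧ Odd i)
    then faceVal σ (i + 1) < faceVal σ i
    else faceVal σ i < faceVal σ (i + 1)

/-- `x` lies strictly between `lo` and `hi` (in either order). -/
def StrictlyBetween (x a b : ℕ) : Prop := min a b < x ∧ x < max a b

/-- Condition (2): no two creases on the same side cross. -/
def NoCrossings (n : ℕ) (σ : Equiv.Perm (Fin n)) : Prop :=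
  ∀ i j, i + 1 < n → j + 1 < n → i % 2 = j % 2 →
    ¬ Xor' (StrictlyBetween (faceVal σ j) (faceVal σ i) (faceVal σ (i + 1)))
           (StrictlyBetween (faceVal σ (j + 1)) (faceVal σ i) (faceVal σ (i + 1)))

/-- A valid layer ordering for the MV assignment `μ` on the `1 × n` strip. -/
def ValidLayerOrdering (n : ℕ) (μ : ℕ → MV) (σ : Equiv.Perm (Fin n)) : Prop :=
  MVRelations n μ σ ∧ NoCrossings n σ

/-- `c(μ)`: the number of valid layer orderings for `μ` on the `1 × n` strip. -/
noncomputable def foldCount (n : ℕ) (μ : ℕ → MV) : ℕ :=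
  Nat.card {σ : Equiv.Perm (Fin n) // ValidLayerOrdering n μ σ}

/-- The 2-alternating assignment: crease `(k,k+1)` is `M` if `⌊k/2⌋` is even, `V` otherwise. -/
def twoAlt : ℕ → MV := fun k => if Even (k / 2) then MV.M else MV.V

/-- One allowed step of the walk: from `(a,b)` one may move to `(b+1,i)` with `1 ≤ i ≤ a`. -/
def WalkStep (p q : ℤ × ℤ) : Prop := q.1 = p.2 + 1 ∧ 1 ≤ q.2 ∧ q.2 ≤ p.1

/-- `l` is the list of points `p_0, …, p_m` of a walk of length `m` in `ℤ²`
starting at `(2,1)` with the allowed steps. -/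
def IsWalk (m : ℕ) (l : List (ℤ × ℤ)) : Prop :=
  l.length = m + 1 ∧ l.head? = some (2, 1) ∧ l.Chain' WalkStep

/-- The number of walks of length `m`. -/
noncomputable def walkCount (m : ℕ) : ℕ :=
  Nat.card {l : List (ℤ × ℤ) // IsWalk m l}

/-- `W_m(a,b)`: the number of walks of length `m` ending at the point `(a,b)`. -/
noncomputable def walkCountEnd (m : ℕ) (a b : ℤ) : ℕ :=
  Nat.card {l : List (ℤ × ℤ) // IsWalk m l ∧ l.getLast? = some (a, b)}

/-! Layer orderings are stored as position functions `f : ℕ → ℕ`, reflected so that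
the next two creases always go down, then up. -/

/-- Reflected valid layer orderings with `m` blocks. -/
structure TT (m : ℕ) (f : ℕ → ℕ) : Prop where
  le : ∀ i, i ≤ 2 * m → f i ≤ 2 * m
  inj : ∀ i j, i ≤ 2 * m → j ≤ 2 * m → f i = f j → i = j
  out : ∀ i, 2 * m < i → f i = 0
  dn : ∀ i, i < 2 * m → (i / 2 + m + i) % 2 = 0 → f (i + 1) < f i
  up : ∀ i, i < 2 * m → (i / 2 + m + i) % 2 = 1 → f i < f (i + 1)
  nc : ∀ i j, i < 2 * m → j < 2 * m → i % 2 = j % 2 →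
    (StrictlyBetween (f j) (f i) (f (i + 1)) ↔ StrictlyBetween (f (j + 1)) (f i) (f (i + 1)))

/-- Visible gaps above (including the one directly below the last face). -/
def gapA (m : ℕ) (f : ℕ → ℕ) : Finset ℕ :=
  (Finset.range (2 * m + 2)).filter (fun p => f (2 * m) ≤ p ∧
    ∀ j < m, ((f (2 * m) ≤ f (2 * j + 1) ∧ f (2 * j + 1) < p) ↔
      (f (2 * m) ≤ f (2 * j + 2) ∧ f (2 * j + 2) < p)))

/-- Visible gaps below the last face. -/
def gapB (m : ℕ) (f : ℕ → ℕ) : Finset ℕ :=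
  (Finset.range (2 * m + 2)).filter (fun p => p ≤ f (2 * m) ∧
    ∀ j < m, ((p ≤ f (2 * j + 1) ∧ f (2 * j + 1) < f (2 * m)) ↔
      (p ≤ f (2 * j + 2) ∧ f (2 * j + 2) < f (2 * m))))

/-- The structural invariant. -/
structure FInv (m : ℕ) (f : ℕ → ℕ) : Prop where
  a : ∀ p ∈ gapA m f, ∀ x, x ≤ 2 * m → f x = p → (x / 2 + m + x) % 2 = 0
  b : ∀ p ∈ gapB m f, ∀ x, x ≤ 2 * m → f x + 1 = p → (x / 2 + m + x) % 2 = 1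

/-- Insert two faces and reflect. -/
def child (m : ℕ) (f : ℕ → ℕ) (p : ℕ) : ℕ → ℕ := fun i =>
  if i ≤ 2 * m then
    (if f i < f (2 * m) then 2 * m + 2 - f i else if f i < p then 2 * m + 1 - f i
      else 2 * m - f i)
  else if i = 2 * m + 1 then 2 * m + 2 - f (2 * m)
  else if i = 2 * m + 2 then 2 * m + 1 - p else 0

/-- Remove two faces and reflect. -/
def parent (m : ℕ) (g : ℕ → ℕ) : ℕ → ℕ := fun i =>
  if i ≤ 2 * m then
    2 * m + 2 - g i - (if g i < g (2 * m + 1) then 1 else 0)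
      - (if g i < g (2 * m + 2) then 1 else 0)
  else 0

theorem child_old {m : ℕ} {f : ℕ → ℕ} {p i : ℕ} (hi : i ≤ 2 * m) :
    (f i < f (2 * m) ∧ child m f p i = 2 * m + 2 - f i) ∨
    (f (2 * m) ≤ f i ∧ f i < p ∧ child m f p i = 2 * m + 1 - f i) ∨
    (f (2 * m) ≤ f i ∧ p ≤ f i ∧ child m f p i = 2 * m - f i) := by
  unfold child
  simp only [hi, if_true]
  split_ifs <;> omega

theorem child_one {m : ℕ} {f : ℕ → ℕ} {p : ℕ} :
    child m f p (2 * m + 1) = 2 * m + 2 - f (2 * m) := by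
  simp [child]

theorem child_two {m : ℕ} {f : ℕ → ℕ} {p : ℕ} :
    child m f p (2 * m + 2) = 2 * m + 1 - p := by
  simp [child]

theorem mem_gapA {m : ℕ} {f : ℕ → ℕ} {p : ℕ} : p ∈ gapA m f ↔ p ≤ 2 * m + 1 ∧ f (2 * m) ≤ p ∧
    ∀ j < m, ((f (2 * m) ≤ f (2 * j + 1) ∧ f (2 * j + 1) < p) ↔
      (f (2 * m) ≤ f (2 * j + 2) ∧ f (2 * j + 2) < p)) := by
  simp [gapA, Nat.lt_succ_iff]

theorem mem_gapB {m : ℕ} {f : ℕ → ℕ} {p : ℕ} : p ∈ gapB m f ↔ p ≤ 2 * m + 1 ∧ p ≤ f (2 * m) ∧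
    ∀ j < m, ((p ≤ f (2 * j + 1) ∧ f (2 * j + 1) < f (2 * m)) ↔
      (p ≤ f (2 * j + 2) ∧ f (2 * j + 2) < f (2 * m))) := by
  simp [gapB, Nat.lt_succ_iff]

set_option maxHeartbeats 2000000 in
theorem TT_child {m : ℕ} {f : ℕ → ℕ} (h : TT m f) {p : ℕ} (hp : p ∈ gapA m f) :
    TT (m + 1) (child m f p) := by
  obtain ⟨hp1, hp2, hp3⟩ := mem_gapA.1 hp
  have hc := h.le (2 * m) le_rfl
  have c1 := @child_one m f p
  have c2 := @child_two m f p
  have c0 := @child_old m f p (2 * m) le_rfl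
  refine ⟨?_, ?_, ?_, ?_, ?_, ?_⟩
  · intro i hi
    rcases (by omega : i ≤ 2 * m ∨ i = 2 * m + 1 ∨ i = 2 * m + 2) with hi | rfl | rfl
    · have := @child_old m f p i hi
      omega
    · omega
    · omega
  · intro i j hi hj
    rcases (by omega : i ≤ 2 * m ∨ i = 2 * m + 1 ∨ i = 2 * m + 2) with hi | rfl | rfl <;>
    rcases (by omega : j ≤ 2 * m ∨ j = 2 * m + 1 ∨ j = 2 * m + 2) with hj | rfl | rfl
    · have := @child_old m f p i hi
      have := @child_old m f p j hj
      have := h.le i hi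
      have := h.le j hj
      have := h.inj i j hi hj
      omega
    all_goals first
      | omega
      | (have := @child_old m f p i (by assumption); have := h.le i (by assumption); omega)
      | (have := @child_old m f p j (by assumption); have := h.le j (by assumption); omega)
  · intro i hi
    unfold child
    rw [if_neg (by omega), if_neg (by omega), if_neg (by omega)]
  · intro i hi hpar
    rcases (by omega : i < 2 * m ∨ i = 2 * m ∨ i = 2 * m + 1) with hi | rfl | rfl
    · have := @child_old m f p i hi.le
      have := @child_old m f p (i + 1) hi
      have := h.le i hi.le
      have := h.le (i + 1) hi
      have := h.up i hi (by omega)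
      omega
    · omega
    · show child m f p (2 * m + 2) < _
      omega
  · intro i hi hpar
    rcases (by omega : i < 2 * m ∨ i = 2 * m ∨ i = 2 * m + 1) with hi | rfl | rfl
    · have := @child_old m f p i hi.le
      have := @child_old m f p (i + 1) hi
      have := h.le i hi.le
      have := h.le (i + 1) hi
      have := h.dn i hi (by omega)
      omega
    · omega
    · omega
  · intro i j hi hj hij
    unfold StrictlyBetween
    rcases (by omega : i < 2 * m ∨ i = 2 * m ∨ i = 2 * m + 1) with hi | rfl | rfl <;>
    rcases (by omega : j < 2 * m ∨ j = 2 * m ∨ j = 2 * m + 1) with hj | rfl | rfl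
    · have := @child_old m f p i hi.le
      have := @child_old m f p (i + 1) hi
      have := @child_old m f p j hj.le
      have := @child_old m f p (j + 1) hj
      have := h.le i hi.le
      have := h.le (i + 1) hi
      have := h.le j hj.le
      have := h.le (j + 1) hj
      have hn := h.nc i j hi hj hij
      have e1 := h.inj i j hi.le hj.le
      have e2 := h.inj (i+1) j hi hj.le
      have e3 := h.inj i (j+1) hi.le hj
      have e4 := h.inj (i+1) (j+1) hi hj
      unfold StrictlyBetween at hn
      have key : ∀ a b, a ≤ 2 * m → b ≤ 2 * m →
          (child m f p a < child m f p b ↔ f b < f a) := by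
        intro a b ha hb
        have := @child_old m f p a ha
        have := @child_old m f p b hb
        have := h.le a ha
        have := h.le b hb
        omega
      simp only [min_lt_iff, lt_max_iff] at hn ⊢
      rw [key _ _ hi.le hj.le, key _ _ hi hj.le, key _ _ hj.le hi.le, key _ _ hj.le hi,
        key _ _ hi.le hj, key _ _ hi hj, key _ _ hj hi.le, key _ _ hj hi]
      exact and_comm.trans (hn.trans and_comm)
    · have := @child_old m f p i hi.le
      have := @child_old m f p (i + 1) hi
      have := h.le i hi.le
      have := h.le (i + 1) hi
      have := h.inj i (2 * m) hi.le le_rfl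
      have := h.inj (i+1) (2 * m) hi le_rfl
      omega
    · obtain ⟨k, rfl⟩ : ∃ k, i = 2 * k + 1 := ⟨i / 2, by omega⟩
      have := @child_old m f p (2 * k + 1) (by omega)
      have := @child_old m f p (2 * k + 2) (by omega)
      have := h.le (2 * k + 1) (by omega)
      have := h.le (2 * k + 2) (by omega)
      have := hp3 k (by omega)
      have e : ∀ k, 2 * k + 1 + 1 = 2 * k + 2 := fun _ => rfl
      simp only [e, c1, c2]
      clear c0 c1 c2
      omega
    · have := @child_old m f p j hj.le
      have := @child_old m f p (j + 1) hj
      have := h.le j hj.le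
      have := h.le (j + 1) hj
      have := h.inj j (2 * m) hj.le le_rfl
      have := h.inj (j+1) (2 * m) hj le_rfl
      omega
    · omega
    · omega
    · obtain ⟨k, rfl⟩ : ∃ k, j = 2 * k + 1 := ⟨j / 2, by omega⟩
      have := @child_old m f p (2 * k + 1) (by omega)
      have := @child_old m f p (2 * k + 2) (by omega)
      have := h.le (2 * k + 1) (by omega)
      have := h.le (2 * k + 2) (by omega)
      have := hp3 k (by omega)
      have e : ∀ k, 2 * k + 1 + 1 = 2 * k + 2 := fun _ => rfl
      simp only [e, c1, c2]
      clear c0 c1 c2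
      omega
    · omega
    · have e : ∀ k, 2 * k + 1 + 1 = 2 * k + 2 := fun _ => rfl
      simp only [e]
      omega

theorem mem_gapA_child {m : ℕ} {f : ℕ → ℕ} (h : TT m f) {p : ℕ} (hp : p ∈ gapA m f) (q : ℕ) :
    q ∈ gapA (m + 1) (child m f p) ↔
      q = 2 * m + 1 - p ∨ (q ≤ 2 * m + 3 ∧ 2 * m + 3 - q ∈ gapB m f) := by
  obtain ⟨hp1, hp2, hp3⟩ := mem_gapA.1 hp
  have hc := h.le (2 * m) le_rfl
  have c1 := @child_one m f p
  have c2 := @child_two m f p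
  rw [mem_gapA, mem_gapB]
  simp only [show 2 * (m + 1) = 2 * m + 2 from rfl]
  constructor
  · rintro ⟨h1, h2, h3⟩
    by_cases hq : q = 2 * m + 1 - p
    · exact Or.inl hq
    have hm3 := h3 m (by omega)
    refine Or.inr ⟨by omega, by omega, ?_, ?_⟩
    · have := h3 m (by omega)
      omega
    · intro j hj
      have hm := h3 m (by omega)
      have := h3 j (by omega)
      have := hp3 j hj
      have := @child_old m f p (2 * j + 1) (by omega)
      have := @child_old m f p (2 * j + 2) (by omega)
      have := h.le (2 * j + 1) (by omega)
      have := h.le (2 * j + 2) (by omega)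
      omega
  · rintro (rfl | ⟨h1, h2, h3, h4⟩)
    · refine ⟨by omega, by omega, ?_⟩
      intro j hj
      omega
    · refine ⟨by omega, by omega, ?_⟩
      intro j hj
      rcases (by omega : j < m ∨ j = m) with hj | rfl
      · have := h4 j (by omega)
        have := hp3 j hj
        have := @child_old m f p (2 * j + 1) (by omega)
        have := @child_old m f p (2 * j + 2) (by omega)
        have := h.le (2 * j + 1) (by omega)
        have := h.le (2 * j + 2) (by omega)
        omega
      · omega

theorem mem_gapB_child {m : ℕ} {f : ℕ → ℕ} (h : TT m f) {p : ℕ} (hp : p ∈ gapA m f) (q : ℕ) :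
    q ∈ gapB (m + 1) (child m f p) ↔
      (q + p ≤ 2 * m + 1 ∧ 2 * m + 1 - q ∈ gapA m f) := by
  obtain ⟨hp1, hp2, hp3⟩ := mem_gapA.1 hp
  have hc := h.le (2 * m) le_rfl
  have c1 := @child_one m f p
  have c2 := @child_two m f p
  rw [mem_gapA, mem_gapB]
  simp only [show 2 * (m + 1) = 2 * m + 2 from rfl]
  constructor
  · rintro ⟨h1, h2, h3⟩
    refine ⟨by omega, by omega, by omega, ?_⟩
    intro j hj
    have := h3 j (by omega)
    have := hp3 j hj
    have := @child_old m f p (2 * j + 1) (by omega)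
    have := @child_old m f p (2 * j + 2) (by omega)
    have := h.le (2 * j + 1) (by omega)
    have := h.le (2 * j + 2) (by omega)
    omega
  · rintro ⟨h1, h2, h3, h4⟩
    refine ⟨by omega, by omega, ?_⟩
    intro j hj
    rcases (by omega : j < m ∨ j = m) with hj | rfl
    · have := h4 j (by omega)
      have := hp3 j hj
      have := @child_old m f p (2 * j + 1) (by omega)
      have := @child_old m f p (2 * j + 2) (by omega)
      have := h.le (2 * j + 1) (by omega)
      have := h.le (2 * j + 2) (by omega)
      omega
    · omega

theorem card_gapA_child {m : ℕ} {f : ℕ → ℕ} (h : TT m f) {p : ℕ} (hp : p ∈ gapA m f) :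
    (gapA (m + 1) (child m f p)).card = (gapB m f).card + 1 := by
  obtain ⟨hp1, hp2, hp3⟩ := mem_gapA.1 hp
  have hc := h.le (2 * m) le_rfl
  have e : gapA (m + 1) (child m f p) =
      insert (2 * m + 1 - p) ((gapB m f).image (fun q => 2 * m + 3 - q)) := by
    ext q
    rw [mem_gapA_child h hp, Finset.mem_insert, Finset.mem_image]
    refine or_congr Iff.rfl ⟨fun hq => ⟨_, hq.2, by omega⟩, ?_⟩
    rintro ⟨r, hr, rfl⟩
    have := (mem_gapB.1 hr).1
    refine ⟨by omega, ?_⟩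
    rwa [show 2 * m + 3 - (2 * m + 3 - r) = r by omega]
  rw [e, Finset.card_insert_of_notMem, Finset.card_image_of_injOn]
  · intro a ha b hb hab
    have := (mem_gapB.1 ha).1
    have := (mem_gapB.1 hb).1
    simp only at hab
    omega
  · rw [Finset.mem_image]
    rintro ⟨r, hr, hrr⟩
    have := (mem_gapB.1 hr).2.1
    omega

theorem card_gapB_child {m : ℕ} {f : ℕ → ℕ} (h : TT m f) {p : ℕ} (hp : p ∈ gapA m f) :
    (gapB (m + 1) (child m f p)).card = ((gapA m f).filter (fun q => p ≤ q)).card := by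
  have e : gapB (m + 1) (child m f p) =
      ((gapA m f).filter (fun q => p ≤ q)).image (fun q => 2 * m + 1 - q) := by
    ext q
    simp only [mem_gapB_child h hp, Finset.mem_image, Finset.mem_filter]
    constructor
    · rintro ⟨h1, h2⟩
      exact ⟨_, ⟨h2, by omega⟩, by omega⟩
    · rintro ⟨r, ⟨hr, hpr⟩, rfl⟩
      have := (mem_gapA.1 hr).1
      refine ⟨by omega, ?_⟩
      rwa [show 2 * m + 1 - (2 * m + 1 - r) = r by omega]
  rw [e, Finset.card_image_of_injOn]
  intro a ha b hb hab
  have := (mem_gapA.1 (Finset.mem_filter.1 ha).1).1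
  have := (mem_gapA.1 (Finset.mem_filter.1 hb).1).1
  simp only at hab
  omega

theorem FInv_child {m : ℕ} {f : ℕ → ℕ} (h : TT m f) (hI : FInv m f) {p : ℕ} (hp : p ∈ gapA m f) :
    FInv (m + 1) (child m f p) := by
  obtain ⟨hp1, hp2, hp3⟩ := mem_gapA.1 hp
  have hc := h.le (2 * m) le_rfl
  have c1 := @child_one m f p
  have c2 := @child_two m f p
  constructor
  · intro q hq x hx hxq
    rcases (mem_gapA_child h hp q).1 hq with hq | ⟨hq1, hq2⟩
    · rcases (by omega : x ≤ 2 * m ∨ x = 2 * m + 1 ∨ x = 2 * m + 2) with hx | rfl | rfl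
      · have := @child_old m f p x hx
        have := h.le x hx
        omega
      · omega
      · omega
    · have := (mem_gapB.1 hq2).2.1
      rcases (by omega : x ≤ 2 * m ∨ x = 2 * m + 1 ∨ x = 2 * m + 2) with hx | rfl | rfl
      · have := @child_old m f p x hx
        have := h.le x hx
        have := hI.b _ hq2 x hx (by omega)
        omega
      · omega
      · omega
  · intro q hq x hx hxq
    obtain ⟨hq1, hq2⟩ := (mem_gapB_child h hp q).1 hq
    rcases (by omega : x ≤ 2 * m ∨ x = 2 * m + 1 ∨ x = 2 * m + 2) with hx | rfl | rfl
    · have := @child_old m f p x hx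
      have := h.le x hx
      have := hI.a _ hq2 x hx (by omega)
      omega
    · omega
    · omega

theorem parent_child {m : ℕ} {f : ℕ → ℕ} (h : TT m f) {p : ℕ} (hp : p ∈ gapA m f) :
    parent m (child m f p) = f := by
  obtain ⟨hp1, hp2, hp3⟩ := mem_gapA.1 hp
  have hc := h.le (2 * m) le_rfl
  have c1 := @child_one m f p
  have c2 := @child_two m f p
  funext i
  by_cases hi : i ≤ 2 * m
  · have := @child_old m f p i hi
    have := h.le i hi
    unfold parent
    rw [if_pos hi]
    split_ifs <;> omega
  · rw [h.out i (by omega)]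
    unfold parent
    rw [if_neg hi]

theorem TT.surj {m : ℕ} {f : ℕ → ℕ} (h : TT m f) {p : ℕ} (hp : p ≤ 2 * m) :
    ∃ i, i ≤ 2 * m ∧ f i = p := by
  have := Finset.surj_on_of_inj_on_of_card_le (s := Finset.range (2 * m + 1))
    (t := Finset.range (2 * m + 1)) (fun a _ => f a)
    (fun a ha => by
      have := h.le a (by simpa [Nat.lt_succ_iff] using ha)
      simpa [Nat.lt_succ_iff] using this)
    (fun a b ha hb hab => h.inj a b (by simpa [Nat.lt_succ_iff] using ha)
      (by simpa [Nat.lt_succ_iff] using hb) hab) le_rfl p (by simpa [Nat.lt_succ_iff] using hp)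
  obtain ⟨a, ha, hpa⟩ := this
  exact ⟨a, by simpa [Nat.lt_succ_iff] using ha, hpa.symm⟩

theorem parent_old {m : ℕ} {g : ℕ → ℕ} (h : TT (m + 1) g) {i : ℕ} (hi : i ≤ 2 * m) :
    g i ≤ 2 * m + 2 ∧ g i ≠ g (2 * m + 1) ∧ g i ≠ g (2 * m + 2) ∧
    ((g (2 * m + 1) < g i ∧ parent m g i + g i = 2 * m + 2) ∨
     (g i < g (2 * m + 1) ∧ g (2 * m + 2) < g i ∧ parent m g i + g i = 2 * m + 1) ∨
     (g i < g (2 * m + 2) ∧ parent m g i + g i = 2 * m)) := by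
  have h1 := h.le i (by omega)
  have h2 := h.le (2 * m + 1) (by omega)
  have h3 := h.inj i (2 * m + 1) (by omega) (by omega)
  have h4 := h.inj i (2 * m + 2) (by omega) (by omega)
  have h5 : g (2 * m + 2) < g (2 * m + 1) := h.dn (2 * m + 1) (by omega) (by omega)
  have h6 : g i ≠ g (2 * m + 1) := by omega
  have h7 : g i ≠ g (2 * m + 2) := by omega
  refine ⟨by omega, h6, h7, ?_⟩
  unfold parent
  rw [if_pos hi]
  split_ifs <;> omega

theorem TT.parent {m : ℕ} {g : ℕ → ℕ} (h : TT (m + 1) g) : TT m (parent m g) := by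
  have d1 := h.up (2 * m) (by omega) (by omega)
  have d2 : g (2 * m + 2) < g (2 * m + 1) := h.dn (2 * m + 1) (by omega) (by omega)
  have d3 := h.le (2 * m + 1) (by omega)
  have key : ∀ a b, a ≤ 2 * m → b ≤ 2 * m →
      (_root_.parent m g a < _root_.parent m g b ↔ g b < g a) := by
    intro a b ha hb
    have := parent_old h ha
    have := parent_old h hb
    omega
  refine ⟨?_, ?_, ?_, ?_, ?_, ?_⟩
  · intro i hi
    have := parent_old h hi
    omega
  · intro i j hi hj hij
    have k1 := key i j hi hj
    have k2 := key j i hj hi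
    exact h.inj i j (by omega) (by omega) (by omega)
  · intro i hi
    unfold _root_.parent
    rw [if_neg (by omega)]
  · intro i hi hpar
    rw [key _ _ hi hi.le]
    exact h.up i (by omega) (by omega)
  · intro i hi hpar
    rw [key _ _ hi.le hi]
    exact h.dn i (by omega) (by omega)
  · intro i j hi hj hij
    have hn := h.nc i j (by omega) (by omega) hij
    unfold StrictlyBetween at hn ⊢
    simp only [min_lt_iff, lt_max_iff] at hn ⊢
    rw [key _ _ hi.le hj.le, key _ _ hi hj.le, key _ _ hj.le hi.le, key _ _ hj.le hi,
      key _ _ hi.le hj, key _ _ hi hj, key _ _ hj hi.le, key _ _ hj hi]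
    exact and_comm.trans (hn.trans and_comm)

theorem exists_child {m : ℕ} {g : ℕ → ℕ} (h : TT (m + 1) g) (hI : FInv m (parent m g)) :
    ∃ p ∈ gapA m (parent m g), g = child m (parent m g) p := by
  have hf := h.parent
  have d1 := h.up (2 * m) (by omega) (by omega)
  have d2 : g (2 * m + 2) < g (2 * m + 1) := h.dn (2 * m + 1) (by omega) (by omega)
  have d3 := h.le (2 * m + 1) (by omega)
  have p0 := parent_old h (le_refl (2 * m))
  have hB : parent m g (2 * m) ∈ gapB m (parent m g) := by
    rw [mem_gapB]
    have := hf.le (2 * m) le_rfl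
    exact ⟨by omega, le_rfl, fun j _ => by omega⟩
  have hc : parent m g (2 * m) + g (2 * m + 1) = 2 * m + 2 := by
    by_contra hne
    obtain ⟨x, hx, hxe⟩ := hf.surj (p := parent m g (2 * m) - 1)
      (by have := hf.le (2 * m) le_rfl; omega)
    have hxb := hI.b _ hB x hx (by omega)
    have px := parent_old h hx
    have hx' : x ≠ 2 * m := by rintro rfl; omega
    rcases Nat.even_or_odd' x with ⟨k, rfl | rfl⟩
    · have py := parent_old h (i := 2 * k + 1) (by omega)
      have hu := hf.up (2 * k) (by omega) (by omega)
      have hi := hf.inj (2 * k + 1) (2 * m) (by omega) (by omega)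
      have hn := h.nc (2 * m) (2 * k) (by omega) (by omega) (by omega)
      unfold StrictlyBetween at hn
      omega
    · have py := parent_old h (i := 2 * k) (by omega)
      have hu := hf.dn (2 * k) (by omega) (by omega)
      have hi := hf.inj (2 * k) (2 * m) (by omega) (by omega)
      have hn := h.nc (2 * m) (2 * k) (by omega) (by omega) (by omega)
      unfold StrictlyBetween at hn
      omega
  refine ⟨2 * m + 1 - g (2 * m + 2), ?_, ?_⟩
  · rw [mem_gapA]
    refine ⟨by omega, by omega, ?_⟩
    intro j hj
    have a1 := parent_old h (i := 2 * j + 1) (by omega)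
    have a2 := parent_old h (i := 2 * j + 2) (by omega)
    have hn := h.nc (2 * m + 1) (2 * j + 1) (by omega) (by omega) (by omega)
    unfold StrictlyBetween at hn
    simp only [show 2 * m + 1 + 1 = 2 * m + 2 from rfl,
      show 2 * j + 1 + 1 = 2 * j + 2 from rfl] at hn
    omega
  · funext i
    rcases (by omega : i ≤ 2 * m ∨ i = 2 * m + 1 ∨ i = 2 * m + 2 ∨ 2 * m + 2 < i) with
      hi | rfl | rfl | hi
    · have := parent_old h hi
      have := @child_old m (parent m g) (2 * m + 1 - g (2 * m + 2)) i hi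
      omega
    · rw [child_one]
      omega
    · rw [child_two]
      omega
    · rw [h.out i (by omega)]
      unfold child
      rw [if_neg (by omega), if_neg (by omega), if_neg (by omega)]

theorem rank_inj (A : Finset ℕ) {p q : ℕ} (hp : p ∈ A) (hq : q ∈ A)
    (h : (A.filter (fun r => p ≤ r)).card = (A.filter (fun r => q ≤ r)).card) : p = q := by
  have aux : ∀ {p q : ℕ}, p ∈ A → p < q →
      (A.filter (fun r => q ≤ r)).card < (A.filter (fun r => p ≤ r)).card := by
    intro p q hp hpq
    apply Finset.card_lt_card
    rw [Finset.ssubset_iff_of_subset]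
    · exact ⟨p, by simp [hp], by simp [hpq]⟩
    · intro r hr
      simp only [Finset.mem_filter] at hr ⊢
      exact ⟨hr.1, by omega⟩
  rcases lt_trichotomy p q with hpq | hpq | hpq
  · have := aux hp hpq
    omega
  · exact hpq
  · have := aux hq hpq
    omega

theorem rankA_pos (A : Finset ℕ) {p : ℕ} (hp : p ∈ A) :
    1 ≤ (A.filter (fun r => p ≤ r)).card :=
  Finset.card_pos.2 ⟨p, by simp [hp]⟩

theorem rank_surj (A : Finset ℕ) {i : ℕ} (h1 : 1 ≤ i) (h2 : i ≤ A.card) :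
    ∃ p ∈ A, (A.filter (fun r => p ≤ r)).card = i := by
  have := Finset.surj_on_of_inj_on_of_card_le (s := A) (t := Finset.Icc 1 A.card)
    (fun p _ => (A.filter (fun r => p ≤ r)).card)
    (fun p hp => Finset.mem_Icc.2 ⟨rankA_pos A hp, Finset.card_filter_le _ _⟩)
    (fun p q hp hq h => rank_inj A hp hq h) (by simp) i (Finset.mem_Icc.2 ⟨h1, h2⟩)
  obtain ⟨p, hp, h⟩ := this
  exact ⟨p, hp, h.symm⟩

/-- The walk point attached to a layer ordering. -/
def st (m : ℕ) (f : ℕ → ℕ) : ℤ × ℤ := ((gapA m f).card, (gapB m f).card)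

theorem isWalk_snoc {m : ℕ} {l : List (ℤ × ℤ)} {p q : ℤ × ℤ} (hl : l.getLast? = some p) :
    IsWalk (m + 1) (l ++ [q]) ↔ IsWalk m l ∧ WalkStep p q := by
  unfold IsWalk
  have hne : l ≠ [] := by rintro rfl; simp at hl
  have hh : (l ++ [q]).head? = l.head? := by
    cases l with
    | nil => exact absurd rfl hne
    | cons a t => rfl
  rw [hh, List.length_append]
  have hc : (l ++ [q]).Chain' WalkStep ↔ l.Chain' WalkStep ∧ WalkStep p q := by
    show List.IsChain WalkStep (l ++ [q]) ↔ List.IsChain WalkStep l ∧ WalkStep p q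
    rw [List.isChain_append]
    simp [hl]
  rw [hc]
  simp only [List.length_singleton, Nat.add_right_cancel_iff]
  tauto

theorem main_bij (m : ℕ) : (∀ f, TT m f → FInv m f) ∧ ∃ φ : (ℕ → ℕ) → List (ℤ × ℤ),
    Set.BijOn φ {f | TT m f} {l | IsWalk m l} ∧
      ∀ f, TT m f → (φ f).getLast? = some (st m f) := by
  induction m with
  | zero =>
    have hf0 : ∀ f, TT 0 f → f = fun _ => 0 := by
      intro f h
      funext i
      rcases Nat.eq_zero_or_pos i with rfl | hi
      · have := h.le 0 (by omega)
        omega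
      · exact h.out i (by omega)
    have hT0 : TT 0 (fun _ => 0) := by
      refine ⟨?_, ?_, ?_, ?_, ?_, ?_⟩ <;> intros <;> omega
    have hst : st 0 (fun _ => 0) = (2, 1) := by
      have e1 : gapA 0 (fun _ => 0) = {0, 1} := by
        ext q
        rw [mem_gapA]
        simp
        omega
      have e2 : gapB 0 (fun _ => 0) = {0} := by
        ext q
        rw [mem_gapB]
        simp
        omega
      unfold st
      rw [e1, e2]
      simp
    refine ⟨?_, fun _ => [(2, 1)], ⟨?_, ?_, ?_⟩, ?_⟩
    · intro f h
      obtain rfl := hf0 f h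
      constructor
      · intros
        omega
      · intro p hp x hx hxp
        have := (mem_gapB.1 hp).2.1
        omega
    · intro f _
      simp [IsWalk, List.Chain']
    · intro f hf g hg _
      rw [hf0 f hf, hf0 g hg]
    · rintro l ⟨hl, hh, _⟩
      refine ⟨fun _ => 0, hT0, ?_⟩
      match l, hl, hh with
      | [a], _, hh => simpa using hh.symm
    · intro f h
      obtain rfl := hf0 f h
      rw [hst]
      rfl
  | succ m ih =>
    obtain ⟨hInv, φ, ⟨hmap, hinj, hsurj⟩, hlast⟩ := ih
    have hpc : ∀ g, TT (m + 1) g → TT m (parent m g) ∧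
        ∃ p ∈ gapA m (parent m g), g = child m (parent m g) p :=
      fun g hg => ⟨hg.parent, exists_child hg (hInv _ hg.parent)⟩
    have hstc : ∀ f, TT m f → ∀ p ∈ gapA m f, st (m + 1) (child m f p) =
        (((gapB m f).card : ℤ) + 1, (((gapA m f).filter (fun q => p ≤ q)).card : ℤ)) := by
      intro f hf p hp
      unfold st
      rw [card_gapA_child hf hp, card_gapB_child hf hp]
      simp
    refine ⟨?_, fun g => φ (parent m g) ++ [st (m + 1) g], ⟨?_, ?_, ?_⟩, ?_⟩
    · intro g hg
      obtain ⟨hf, p, hp, e⟩ := hpc g hg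
      rw [e]
      exact FInv_child hf (hInv _ hf) hp
    · intro g hg
      obtain ⟨hf, p, hp, e⟩ := hpc g hg
      have hs : st (m + 1) g = _ := (congrArg (st (m + 1)) e).trans (hstc _ hf p hp)
      refine (isWalk_snoc (hlast _ hf)).2 ⟨hmap hf, ?_⟩
      rw [hs]
      refine ⟨rfl, ?_, ?_⟩
      · simp only
        exact_mod_cast rankA_pos _ hp
      · simp only [st]
        exact_mod_cast Finset.card_filter_le _ _
    · intro g hg g' hg' hgg
      obtain ⟨hf, p, hp, e⟩ := hpc g hg
      obtain ⟨hf', p', hp', e'⟩ := hpc g' hg'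
      obtain ⟨h1, h2⟩ := List.append_inj' hgg rfl
      have h3 := hinj hf hf' h1
      rw [← h3] at hp' e'
      have hs : st (m + 1) g = _ := (congrArg (st (m + 1)) e).trans (hstc _ hf p hp)
      have hs' : st (m + 1) g' = _ := (congrArg (st (m + 1)) e').trans (hstc _ hf p' hp')
      have h4 : st (m + 1) g = st (m + 1) g' := by simpa using h2
      rw [hs, hs'] at h4
      have h5 := congrArg Prod.snd h4
      simp only [Nat.cast_inj] at h5
      have := rank_inj _ hp hp' h5
      rw [e, e', this]
    · intro l hl
      have hne : l ≠ [] := by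
        rintro rfl
        have := hl.1
        simp at this
      obtain ⟨l', q, rfl⟩ : ∃ l' q, l = l' ++ [q] :=
        ⟨_, _, (List.dropLast_append_getLast hne).symm⟩
      have hne' : l' ≠ [] := by
        rintro rfl
        have := hl.1
        simp at this
      have hl' := (isWalk_snoc (List.getLast?_eq_getLast_of_ne_nil hne')).1 hl
      obtain ⟨f, hf, rfl⟩ := hsurj hl'.1
      have hw := ((isWalk_snoc (hlast f hf)).1 hl).2
      obtain ⟨w1, w2, w3⟩ := hw
      obtain ⟨p, hp, hpc'⟩ := rank_surj (gapA m f) (i := q.2.toNat) (by omega)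
        (by simp only [st] at w3; omega)
      refine ⟨child m f p, TT_child hf hp, ?_⟩
      simp only
      rw [parent_child hf hp, hstc f hf p hp, hpc']
      congr 2
      ext
      · simp only [st] at w1
        exact w1.symm
      · simp only
        omega
    · intro g hg
      simp

/-- Position function of a permutation, reflected when `m` is odd. -/
def posFn (m : ℕ) (σ : Equiv.Perm (Fin (2 * m + 1))) : ℕ → ℕ := fun i =>
  if i ≤ 2 * m then (if m % 2 = 0 then faceVal σ i else 2 * m - faceVal σ i) else 0

theorem faceVal_le {m : ℕ} (σ : Equiv.Perm (Fin (2 * m + 1))) (i : ℕ) : faceVal σ i ≤ 2 * m := by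
  unfold faceVal
  split_ifs
  · have := (σ ⟨i, by assumption⟩).2
    omega
  · omega

theorem posFn_lt {m : ℕ} (σ : Equiv.Perm (Fin (2 * m + 1))) {i j : ℕ} (hi : i ≤ 2 * m)
    (hj : j ≤ 2 * m) : posFn m σ i < posFn m σ j ↔
      if m % 2 = 0 then faceVal σ i < faceVal σ j else faceVal σ j < faceVal σ i := by
  have := faceVal_le σ i
  have := faceVal_le σ j
  unfold posFn
  rw [if_pos hi, if_pos hj]
  split_ifs
  · rfl
  · omega

theorem valid_iff (m : ℕ) (σ : Equiv.Perm (Fin (2 * m + 1))) :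
    ValidLayerOrdering (2 * m + 1) twoAlt σ ↔ TT m (posFn m σ) := by
  have hmv : ∀ i, ((twoAlt i = MV.M ∧ Even i) ∨ (twoAlt i = MV.V ∧ Odd i)) ↔
      (i / 2 + i) % 2 = 0 := by
    intro i
    unfold twoAlt
    by_cases h : Even (i / 2)
    · simp only [h, if_true, true_and, reduceCtorEq, false_and, or_false]
      rw [Nat.even_iff] at *
      omega
    · simp only [h, if_false, true_and, reduceCtorEq, false_and, false_or]
      rw [Nat.even_iff] at h
      rw [Nat.odd_iff]
      omega
  constructor
  · rintro ⟨h1, h2⟩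
    refine ⟨?_, ?_, ?_, ?_, ?_, ?_⟩
    · intro i hi
      have := faceVal_le σ i
      unfold posFn
      split_ifs <;> omega
    · intro i j hi hj hij
      have a1 := posFn_lt σ hi hj
      have a2 := posFn_lt σ hj hi
      have : faceVal σ i = faceVal σ j := by
        split_ifs at a1 a2 <;> omega
      unfold faceVal at this
      rw [dif_pos (by omega), dif_pos (by omega)] at this
      have := σ.injective (Fin.ext this)
      simpa using this
    · intro i hi
      unfold posFn
      rw [if_neg (by omega)]
    · intro i hi hpar
      have := h1 i (by omega)
      simp only [hmv] at this
      rw [posFn_lt σ (by omega) (by omega)]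
      split_ifs at this ⊢ <;> first | assumption | omega
    · intro i hi hpar
      have := h1 i (by omega)
      simp only [hmv] at this
      rw [posFn_lt σ (by omega) (by omega)]
      split_ifs at this ⊢ <;> first | assumption | omega
    · intro i j hi hj hij
      have hn := h2 i j (by omega) (by omega) hij
      replace hn := (not_xor _ _).1 hn
      unfold StrictlyBetween at hn ⊢
      simp only [min_lt_iff, lt_max_iff] at hn ⊢
      rw [posFn_lt σ hi.le hj.le, posFn_lt σ hi hj.le, posFn_lt σ hj.le hi.le, posFn_lt σ hj.le hi,
        posFn_lt σ hi.le hj, posFn_lt σ hi hj, posFn_lt σ hj hi.le, posFn_lt σ hj hi]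
      clear * - hn
      split_ifs
      · exact hn
      · exact and_comm.trans (hn.trans and_comm)
  · intro h
    constructor
    · intro i hi
      simp only [hmv]
      have a1 := h.dn i (by omega)
      have a2 := h.up i (by omega)
      rw [posFn_lt σ (by omega) (by omega)] at a1 a2
      split_ifs at a1 a2 ⊢
      · exact a1 (by omega)
      · exact a2 (by omega)
      · exact a2 (by omega)
      · exact a1 (by omega)
    · intro i j hi hj hij
      have hi' : i < 2 * m := by omega
      have hj' : j < 2 * m := by omega
      have hn := h.nc i j hi' hj' hij
      refine (not_xor _ _).2 ?_
      unfold StrictlyBetween at hn ⊢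
      simp only [min_lt_iff, lt_max_iff] at hn ⊢
      rw [posFn_lt σ hi'.le hj'.le, posFn_lt σ hi' hj'.le, posFn_lt σ hj'.le hi'.le,
        posFn_lt σ hj'.le hi', posFn_lt σ hi'.le hj', posFn_lt σ hi' hj', posFn_lt σ hj' hi'.le,
        posFn_lt σ hj' hi'] at hn
      clear * - hn
      split_ifs at hn
      · exact hn
      · exact and_comm.trans (hn.trans and_comm)

theorem posFn_inj (m : ℕ) : Function.Injective (posFn m) := by
  intro σ τ h
  ext ⟨i, hi⟩
  have h1 := congrFun h i
  have := faceVal_le σ i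
  have := faceVal_le τ i
  unfold posFn at h1
  simp only [show i ≤ 2 * m by omega, if_true] at h1
  have h2 : faceVal σ i = faceVal τ i := by
    split_ifs at h1 <;> omega
  unfold faceVal at h2
  rw [dif_pos hi, dif_pos hi] at h2
  exact h2

theorem posFn_surj (m : ℕ) (f : ℕ → ℕ) (h : TT m f) : ∃ σ, posFn m σ = f := by
  let e : Fin (2 * m + 1) → Fin (2 * m + 1) := fun i =>
    ⟨if m % 2 = 0 then f i else 2 * m - f i, by
      have := h.le i (by omega)
      split_ifs <;> omega⟩
  have he : Function.Injective e := by
    intro i j hij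
    have h1 := congrArg Fin.val hij
    have := h.le i (by omega)
    have := h.le j (by omega)
    simp only [e] at h1
    have := h.inj i j (by omega) (by omega) (by split_ifs at h1 <;> omega)
    exact Fin.ext this
  refine ⟨Equiv.ofBijective e (Finite.injective_iff_bijective.1 he), ?_⟩
  funext i
  unfold posFn
  split_ifs with h1 h2
  · unfold faceVal
    rw [dif_pos (by omega)]
    simp [e, h2]
  · unfold faceVal
    rw [dif_pos (by omega)]
    have := h.le i h1
    simp [e, h2]
    omega
  · exact (h.out i (by omega)).symm

/-- Lemma: the number of valid layer orderings of the 2-alternating assignment with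
`m` blocks equals the number of walks of length `m` in `ℤ²` starting at `(2,1)`
with steps `(a,b) → (b+1,i)` for `1 ≤ i ≤ a`. -/
theorem stmt10 (m : ℕ) (hm : 1 ≤ m) :
    foldCount (2 * m + 1) twoAlt = walkCount m := by
  obtain ⟨-, φ, hφ, -⟩ := main_bij m
  have hb : Set.BijOn (posFn m) {σ | ValidLayerOrdering (2 * m + 1) twoAlt σ} {f | TT m f} := by
    refine ⟨fun σ hσ => (valid_iff m σ).1 hσ, (posFn_inj m).injOn, ?_⟩
    intro f hf
    obtain ⟨σ, rfl⟩ := posFn_surj m f hf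
    exact ⟨σ, (valid_iff m σ).2 hf, rfl⟩
  exact Nat.card_congr (((hφ.comp hb)).equiv _)
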